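/- arXiv:2406.11094 — 13 statements merged into one kernel-verified Lean document; each statement's English description precedes it below -/
import Mathlib

section
/- Let f : ℕ → ℕ be a function defined on the positive integers taking positive integer values such that for all positive integers a and b, f(a² + b²) = f(a)·f(b) and f(a²) = f(a)². Then f(n) = 1 for every positive integer n. -/
/-!
If `a² + b² = c² + d²`, then `f a * f b = f c * f d`. The identities
`(2k+7)² + (k+1)² = (2k+5)² + (k+5)²` and `(2k+12)² + (k+1)² = (2k+8)² + (k+9)²`
therefore express `f` at every odd number from `7` on, and at every even number from `12` on,
through values of `f` at smaller positive integers, so strong induction applies. The remaining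
values at `1, 2, 3, 4, 5, 6, 8, 10` come from `1² + 1² = 2`, `1² + 2² = 5`, `2² + 2² = 8`,
`1² + 3² = 10` and the Pythagorean triples `(3, 4, 5)` and `(6, 8, 10)`.
-/

theorem stmt_0 (f : ℕ → ℕ)
    (hpos : ∀ n, 0 < n → 0 < f n)
    (h1 : ∀ a b : ℕ, 0 < a → 0 < b → f (a ^ 2 + b ^ 2) = f a * f b)
    (h2 : ∀ a : ℕ, 0 < a → f (a ^ 2) = (f a) ^ 2) :
    ∀ n : ℕ, 0 < n → f n = 1 := by
  have f1 : f 1 = 1 := by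
    have h := h2 1 (by norm_num)
    have := hpos 1 (by norm_num)
    norm_num at h
    nlinarith
  have f2 : f 2 = 1 := by simpa [f1] using h1 1 1 (by norm_num) (by norm_num)
  have f4 : f 4 = 1 := by simpa [f2] using h2 2 (by norm_num)
  have f5 : f 5 = 1 := by simpa [f1, f2] using h1 1 2 (by norm_num) (by norm_num)
  have f8 : f 8 = 1 := by simpa [f2] using h1 2 2 (by norm_num) (by norm_num)
  have f3 : f 3 = 1 := by
    have h := h1 3 4 (by norm_num) (by norm_num)
    have h' := h2 5 (by norm_num)
    norm_num [f4, f5] at h h'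
    omega
  have f10 : f 10 = 1 := by simpa [f1, f3] using h1 1 3 (by norm_num) (by norm_num)
  have f6 : f 6 = 1 := by
    have h := h1 6 8 (by norm_num) (by norm_num)
    have h' := h2 10 (by norm_num)
    norm_num [f8, f10] at h h'
    omega
  intro n
  induction n using Nat.strong_induction_on with
  | _ n ih =>
    intro hn
    have key : (∃ k, n = 2 * k + 7) ∨ (∃ k, n = 2 * k + 12) ∨
        n = 1 ∨ n = 2 ∨ n = 3 ∨ n = 4 ∨ n = 5 ∨ n = 6 ∨ n = 8 ∨ n = 10 := by
      by_cases ho : n % 2 = 1 ∧ 7 ≤ n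
      · exact Or.inl ⟨(n - 7) / 2, by omega⟩
      · by_cases he : n % 2 = 0 ∧ 12 ≤ n
        · exact Or.inr (Or.inl ⟨(n - 12) / 2, by omega⟩)
        · omega
    rcases key with ⟨k, rfl⟩ | ⟨k, rfl⟩ | rfl | rfl | rfl | rfl | rfl | rfl | rfl | rfl
    · have h := h1 (2 * k + 7) (k + 1) (by omega) (by omega)
      rw [show (2 * k + 7) ^ 2 + (k + 1) ^ 2 = (2 * k + 5) ^ 2 + (k + 5) ^ 2 by ring,
        h1 _ _ (by omega) (by omega), ih (2 * k + 5) (by omega) (by omega),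
        ih (k + 5) (by omega) (by omega), ih (k + 1) (by omega) (by omega)] at h
      omega
    · have h := h1 (2 * k + 12) (k + 1) (by omega) (by omega)
      rw [show (2 * k + 12) ^ 2 + (k + 1) ^ 2 = (2 * k + 8) ^ 2 + (k + 9) ^ 2 by ring,
        h1 _ _ (by omega) (by omega), ih (2 * k + 8) (by omega) (by omega),
        ih (k + 9) (by omega) (by omega), ih (k + 1) (by omega) (by omega)] at h
      omega
    all_goals assumption
end

section
/- Let f : ℕ → ℕ be a function defined on the positive integers taking positive integer values such that for all positive integers a and b, f(a² + b²) = f(a)·f(b) and f(a²) = f(a)². Then for all positive integers u > v, f(u² − v²) · f(2uv) = (f(u) · f(v))². -/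
theorem stmt_1 (f : ℕ → ℕ)
    (hpos : ∀ n, 0 < n → 0 < f n)
    (h1 : ∀ a b : ℕ, 0 < a → 0 < b → f (a ^ 2 + b ^ 2) = f a * f b)
    (h2 : ∀ a : ℕ, 0 < a → f (a ^ 2) = (f a) ^ 2) :
    ∀ u v : ℕ, 0 < v → v < u →
      f (u ^ 2 - v ^ 2) * f (2 * u * v) = (f u * f v) ^ 2 := by
  intro u v hv huv
  have hu : 0 < u := hv.trans huv
  have hlt : v ^ 2 < u ^ 2 := Nat.pow_lt_pow_left huv two_ne_zero
  have key : (u ^ 2 - v ^ 2) ^ 2 + (2 * u * v) ^ 2 = (u ^ 2 + v ^ 2) ^ 2 := by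
    zify [hlt.le]
    ring
  -- Both sides are the value of `f` at `(u² + v²)²`.
  rw [← h1 _ _ (Nat.sub_pos_of_lt hlt) (by positivity), key, h2 _ (by positivity), h1 u v hu hv]
end

section
/- Let Δ be a closed equilateral triangle in the plane of side length L > 0, and suppose n closed equilateral triangles of side length 1 with pairwise disjoint interiors are contained in Δ, each having its sides parallel to the sides of Δ but with opposite orientation (each small triangle is a translate of the reflection of a scaled copy of Δ). Then n ≤ (2/3)·L². -/
/-!
Two translates `a + K`, `b + K` of a convex body have disjoint interiors if and only if the
translates of the symmetrisation `(K - K) / 2` by `a` and `b` do. For a unit triangle `K` the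
symmetrisation is a hexagon of area `3 / 2` times that of `K`. Centred at the centroid of an
inverted triangle contained in `Δ`, this hexagon still lies in `Δ`: towards each side of `Δ` it
reaches half the height of the small triangle, whereas the inverted triangle itself reaches two
thirds of that height. Comparing areas gives `n * (3 / 2) ≤ L ^ 2`.

The computation takes place in the affine coordinates `(a, b) ↦ P + a (Q - P) + b (R - P)`. There
`Δ` is the triangle `0 ≤ a, 0 ≤ b, a + b ≤ 1` of area `1 / 2`, a small triangle is
`x ≤ α, y ≤ β, α + β - s ≤ x + y` with `s = 1 / L`, and the hexagon has area `3 / 4 * s ^ 2`.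
The area comparison is `card_mul_le_of_separated`; `exists_common_point` turns overlapping
hexagons into overlapping triangles.
-/

open MeasureTheory

/-- The open hexagon `|x| < s / 2`, `|y| < s / 2`, `|x + y| < s / 2`, presented as the region
between two graphs so that its area is an integral. -/
def hexagon (s : ℝ) : Set (ℝ × ℝ) :=
  regionBetween (fun x => max (-(s / 2)) (-(s / 2) - x)) (fun x => min (s / 2) (s / 2 - x))
    (Set.Ioc (-(s / 2)) (s / 2))

theorem measurableSet_hexagon (s : ℝ) : MeasurableSet (hexagon s) :=
  measurableSet_regionBetween (by fun_prop) (by fun_prop) measurableSet_Ioc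

theorem volume_hexagon {s : ℝ} (hs : 0 < s) :
    volume (hexagon s) = ENNReal.ofReal (3 / 4 * s ^ 2) := by
  have hc1 : Continuous fun x : ℝ => max (-(s / 2)) (-(s / 2) - x) := by fun_prop
  have hc2 : Continuous fun x : ℝ => min (s / 2) (s / 2 - x) := by fun_prop
  rw [hexagon, Measure.volume_eq_prod, volume_regionBetween_eq_integral
    (hc1.integrableOn_Icc.mono_set Set.Ioc_subset_Icc_self)
    (hc2.integrableOn_Icc.mono_set Set.Ioc_subset_Icc_self) measurableSet_Ioc]
  · congr 1
    rw [← intervalIntegral.integral_of_le (by linarith)]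
    have hi : ∀ a b : ℝ, IntervalIntegrable ((fun x : ℝ => min (s / 2) (s / 2 - x)) -
        fun x => max (-(s / 2)) (-(s / 2) - x)) volume a b :=
      fun a b => (hc2.sub hc1).intervalIntegrable a b
    rw [← intervalIntegral.integral_add_adjacent_intervals (hi _ 0) (hi 0 _)]
    have h1 : ∫ x in (-(s / 2))..0, ((fun x : ℝ => min (s / 2) (s / 2 - x)) -
        fun x => max (-(s / 2)) (-(s / 2) - x)) x = ∫ x in (-(s / 2))..0, (s + x) := by
      apply intervalIntegral.integral_congr
      intro x hx
      rw [Set.uIcc_of_le (by linarith)] at hx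
      simp only [Pi.sub_apply]
      rw [min_eq_left (by linarith [hx.2]), max_eq_right (by linarith [hx.2])]
      ring
    have h2 : ∫ x in (0 : ℝ)..(s / 2), ((fun x : ℝ => min (s / 2) (s / 2 - x)) -
        fun x => max (-(s / 2)) (-(s / 2) - x)) x = ∫ x in (0 : ℝ)..(s / 2), (s - x) := by
      apply intervalIntegral.integral_congr
      intro x hx
      rw [Set.uIcc_of_le (by linarith)] at hx
      simp only [Pi.sub_apply]
      rw [min_eq_right (by linarith [hx.1]), max_eq_left (by linarith [hx.1])]
      ring
    rw [h1, h2, intervalIntegral.integral_add (by simp) (by simp),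
      intervalIntegral.integral_sub (by simp) (by simp)]
    simp only [intervalIntegral.integral_const, integral_id, smul_eq_mul]
    ring
  · intro x hx
    simp only [max_le_iff, le_min_iff]
    refine ⟨⟨?_, ?_⟩, ?_, ?_⟩ <;> linarith [hx.1, hx.2]

/-- The standard triangle, in which all the translated hexagons lie. -/
theorem volume_std_triangle :
    volume (regionBetween (fun _ : ℝ => (0 : ℝ)) (fun x => 1 - x) (Set.Ioc 0 1)) =
      ENNReal.ofReal (1 / 2) := by
  have hc1 : Continuous fun _ : ℝ => (0 : ℝ) := by fun_prop
  have hc2 : Continuous fun x : ℝ => 1 - x := by fun_prop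
  rw [Measure.volume_eq_prod, volume_regionBetween_eq_integral
    (hc1.integrableOn_Icc.mono_set Set.Ioc_subset_Icc_self)
    (hc2.integrableOn_Icc.mono_set Set.Ioc_subset_Icc_self) measurableSet_Ioc]
  · congr 1
    rw [← intervalIntegral.integral_of_le zero_le_one]
    simp only [Pi.sub_apply, sub_zero]
    rw [intervalIntegral.integral_sub (by simp) (by simp)]
    simp only [intervalIntegral.integral_const, integral_id, smul_eq_mul]
    norm_num
  · intro x hx
    linarith [hx.2]

/-- The area comparison. The pairs `(α i, β i)` are the corners of small triangles
`x ≤ α i, y ≤ β i, α i + β i - s ≤ x + y` contained in the standard triangle, and `hsep` says that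
the hexagons around their centroids are pairwise disjoint. -/
theorem card_mul_le_of_separated {n : ℕ} {s : ℝ} (hs : 0 < s) (α β : Fin n → ℝ)
    (hα : ∀ i, s ≤ α i) (hβ : ∀ i, s ≤ β i) (hαβ : ∀ i, α i + β i ≤ 1)
    (hsep : ∀ i j, i ≠ j → ¬ (|α i - α j| < s ∧ |β i - β j| < s ∧
      |(α i + β i) - (α j + β j)| < s)) :
    (n : ℝ) * (3 / 4 * s ^ 2) ≤ 1 / 2 := by
  let c : Fin n → ℝ × ℝ := fun i => (-(α i - s / 3), -(β i - s / 3))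
  let H : Fin n → Set (ℝ × ℝ) := fun i => (fun p => p + c i) ⁻¹' hexagon s
  have hmem : ∀ i p, p ∈ H i → (-(s / 2) < p.1 - (α i - s / 3) ∧ p.1 - (α i - s / 3) ≤ s / 2) ∧
      (-(s / 2) < p.2 - (β i - s / 3) ∧ p.2 - (β i - s / 3) < s / 2) ∧
      (-(s / 2) < p.1 + p.2 - (α i + β i - 2 * s / 3) ∧
        p.1 + p.2 - (α i + β i - 2 * s / 3) < s / 2) := by
    rintro i p ⟨h1, h2⟩
    simp only [c, Prod.fst_add, Prod.snd_add, Set.mem_Ioo, Set.mem_Ioc, max_lt_iff,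
      lt_min_iff] at h1 h2
    obtain ⟨⟨h3, h4⟩, h5, h6⟩ := h2
    refine ⟨⟨?_, ?_⟩, ⟨?_, ?_⟩, ?_, ?_⟩ <;> linarith [h1.1, h1.2]
  have hmeas : ∀ i, MeasurableSet (H i) := fun i =>
    (measurableSet_hexagon s).preimage (measurable_add_const _)
  have hvol : ∀ i, volume (H i) = ENNReal.ofReal (3 / 4 * s ^ 2) := fun i => by
    rw [← volume_hexagon hs]
    exact measure_preimage_add_right _ _ _
  have hdisj : Pairwise (Function.onFun Disjoint H) := by
    intro i j hij
    rw [Function.onFun, Set.disjoint_left]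
    intro p hi hj
    obtain ⟨⟨a1, a2⟩, ⟨a3, a4⟩, a5, a6⟩ := hmem i p hi
    obtain ⟨⟨b1, b2⟩, ⟨b3, b4⟩, b5, b6⟩ := hmem j p hj
    apply hsep i j hij
    simp only [abs_lt]
    refine ⟨⟨?_, ?_⟩, ⟨?_, ?_⟩, ?_, ?_⟩ <;> linarith
  have hsub : (⋃ i, H i) ⊆ regionBetween (fun _ : ℝ => (0 : ℝ)) (fun x => 1 - x)
      (Set.Ioc 0 1) := by
    intro p hp
    obtain ⟨i, hi⟩ := Set.mem_iUnion.1 hp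
    obtain ⟨⟨a1, a2⟩, ⟨a3, a4⟩, a5, a6⟩ := hmem i p hi
    have := hα i
    have := hβ i
    have := hαβ i
    refine ⟨⟨?_, ?_⟩, ?_, ?_⟩ <;> linarith
  have key := measure_mono (μ := volume) hsub
  rw [measure_iUnion hdisj hmeas, volume_std_triangle, tsum_fintype] at key
  simp only [hvol, Finset.sum_const, Finset.card_univ, Fintype.card_fin, nsmul_eq_mul] at key
  rw [← ENNReal.ofReal_natCast, ← ENNReal.ofReal_mul (by positivity),
    ENNReal.ofReal_le_ofReal_iff (by norm_num)] at key
  exact key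

/-- If the differences of the corners of two small triangles lie in the open hexagon
`|x|, |y|, |x + y| < s`, then their interiors meet. The common point is close to the
coordinatewise minimum of the two corners. -/
theorem exists_common_point {s a b a' b' : ℝ} (h1 : |a - a'| < s) (h2 : |b - b'| < s)
    (h3 : |(a + b) - (a' + b')| < s) :
    ∃ x y : ℝ, (x < a ∧ y < b ∧ a + b - s < x + y) ∧
      (x < a' ∧ y < b' ∧ a' + b' - s < x + y) := by
  have hgap : 0 < min a a' + min b b' - (max (a + b) (a' + b') - s) := by
    rw [abs_lt] at h1 h2 h3
    rcases min_choice a a' with h | h <;> rcases min_choice b b' with h' | h' <;>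
      rcases max_choice (a + b) (a' + b') with h'' | h'' <;> rw [h, h', h''] <;> linarith
  obtain ⟨ε, hε⟩ : ∃ ε, ε = min a a' + min b b' - (max (a + b) (a' + b') - s) := ⟨_, rfl⟩
  rw [← hε] at hgap
  have := min_le_left a a'
  have := min_le_right a a'
  have := min_le_left b b'
  have := min_le_right b b'
  have := le_max_left (a + b) (a' + b')
  have := le_max_right (a + b) (a' + b')
  exact ⟨min a a' - ε / 3, min b b' - ε / 3, by refine ⟨⟨?_, ?_, ?_⟩, ?_, ?_, ?_⟩ <;> linarith⟩

/-- An equilateral triangle of positive side is nondegenerate. -/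
theorem det_ne_zero_of_equilateral {L : ℝ} (hL : 0 < L) {P Q R : EuclideanSpace ℝ (Fin 2)}
    (hPQ : dist P Q = L) (hQR : dist Q R = L) (hRP : dist R P = L) :
    (Q 0 - P 0) * (R 1 - P 1) - (Q 1 - P 1) * (R 0 - P 0) ≠ 0 := by
  have sq : ∀ A B : EuclideanSpace ℝ (Fin 2), dist A B = L →
      (A 0 - B 0) ^ 2 + (A 1 - B 1) ^ 2 = L ^ 2 := by
    intro A B h
    rw [← h, EuclideanSpace.dist_eq, Real.sq_sqrt (by positivity), Fin.sum_univ_two,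
      Real.dist_eq, Real.dist_eq, sq_abs, sq_abs]
  have h1 := sq _ _ hPQ
  have h2 := sq _ _ hQR
  have h3 := sq _ _ hRP
  -- Lagrange's identity: the determinant squared is `|u|² |v|² - ⟪u, v⟫² = L⁴ - (L² / 2)²`.
  have hdot : (Q 0 - P 0) * (R 0 - P 0) + (Q 1 - P 1) * (R 1 - P 1) = L ^ 2 / 2 := by
    linear_combination (h1 + h3 - h2) / 2
  have hdet : ((Q 0 - P 0) * (R 1 - P 1) - (Q 1 - P 1) * (R 0 - P 0)) ^ 2 = 3 / 4 * L ^ 4 := by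
    linear_combination ((R 0 - P 0) ^ 2 + (R 1 - P 1) ^ 2) * h1 + L ^ 2 * h3 -
      ((Q 0 - P 0) * (R 0 - P 0) + (Q 1 - P 1) * (R 1 - P 1) + L ^ 2 / 2) * hdot
  intro h
  rw [h] at hdet
  have : 0 < L ^ 4 := by positivity
  linarith

theorem mem_convexHull_triple {E : Type*} [AddCommGroup E] [Module ℝ E] {P Q R x : E} :
    x ∈ convexHull ℝ {P, Q, R} ↔
      ∃ a b : ℝ, 0 ≤ a ∧ 0 ≤ b ∧ a + b ≤ 1 ∧ x = P + a • (Q - P) + b • (R - P) := by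
  constructor
  · intro hx
    rw [convexHull_insert (by simp), mem_convexJoin] at hx
    obtain ⟨p, hp, q, hq, hx⟩ := hx
    rw [Set.mem_singleton_iff] at hp
    subst hp
    rw [convexHull_pair] at hq
    obtain ⟨c, d, hc, hd, hcd, rfl⟩ := hq
    obtain ⟨e, f, he, hf, hef, rfl⟩ := hx
    refine ⟨f * c, f * d, by positivity, by positivity, ?_, ?_⟩
    · rw [← mul_add, hcd]; linarith
    · obtain rfl : e = 1 - f := by linarith
      obtain rfl : c = 1 - d := by linarith
      module
  · rintro ⟨a, b, ha, hb, hab, rfl⟩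
    have hc := convex_convexHull ℝ ({P, Q, R} : Set E)
    have hP : P ∈ convexHull ℝ ({P, Q, R} : Set E) := subset_convexHull _ _ (by simp)
    have hQ : Q ∈ convexHull ℝ ({P, Q, R} : Set E) := subset_convexHull _ _ (by simp)
    have hR : R ∈ convexHull ℝ ({P, Q, R} : Set E) := subset_convexHull _ _ (by simp)
    have := hc.sum_mem (t := Finset.univ) (w := ![1 - a - b, a, b]) (z := ![P, Q, R])
      (by intro i _; fin_cases i <;> simp <;> linarith)
      (by simp [Fin.sum_univ_three]; ring)
      (by intro i _; fin_cases i <;> simpa)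
    simp only [Fin.sum_univ_three, Matrix.cons_val] at this
    convert this using 1
    module

/-- Coordinates of the plane with respect to a nondegenerate triangle `P, Q, R`: continuous
functions `f`, `g` inverse to `(x, y) ↦ P + x (Q - P) + y (R - P)`. -/
theorem exists_coordinates {P Q R : EuclideanSpace ℝ (Fin 2)}
    (hD : (Q 0 - P 0) * (R 1 - P 1) - (Q 1 - P 1) * (R 0 - P 0) ≠ 0) :
    ∃ f g : EuclideanSpace ℝ (Fin 2) → ℝ, Continuous f ∧ Continuous g ∧
      (∀ z, z = P + f z • (Q - P) + g z • (R - P)) ∧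
      ∀ x y : ℝ, f (P + x • (Q - P) + y • (R - P)) = x ∧
        g (P + x • (Q - P) + y • (R - P)) = y := by
  obtain ⟨D, hDdef⟩ : ∃ D, D = (Q 0 - P 0) * (R 1 - P 1) - (Q 1 - P 1) * (R 0 - P 0) := ⟨_, rfl⟩
  rw [← hDdef] at hD
  -- Cramer's rule
  refine ⟨fun z => ((z 0 - P 0) * (R 1 - P 1) - (z 1 - P 1) * (R 0 - P 0)) / D,
    fun z => ((Q 0 - P 0) * (z 1 - P 1) - (Q 1 - P 1) * (z 0 - P 0)) / D,
    by fun_prop, by fun_prop, ?_, ?_⟩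
  · intro z
    ext i
    fin_cases i <;> simp <;> field_simp <;> rw [hDdef] <;> ring
  · intro x y
    constructor <;> simp <;> rw [div_eq_iff hD, hDdef] <;> ring

theorem stmt_4 (L : ℝ) (hL : 0 < L)
    (P Q R : EuclideanSpace ℝ (Fin 2))
    (hPQ : dist P Q = L) (hQR : dist Q R = L) (hRP : dist R P = L)
    (n : ℕ) (t : Fin n → EuclideanSpace ℝ (Fin 2))
    (T : Fin n → Set (EuclideanSpace ℝ (Fin 2)))
    -- each small triangle is a translate of the point reflection of a `1/L`-scaled copy of `Δ`,
    -- hence an inverted equilateral triangle of side length `1`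
    (hT : ∀ i, T i = (fun x => t i - (1 / L) • x) '' convexHull ℝ {P, Q, R})
    -- the small triangles lie inside `Δ`
    (hsub : ∀ i, T i ⊆ convexHull ℝ {P, Q, R})
    -- the small triangles have pairwise disjoint interiors
    (hdisj : ∀ i j, i ≠ j → interior (T i) ∩ interior (T j) = ∅) :
    (n : ℝ) ≤ 2 / 3 * L ^ 2 := by
  obtain ⟨f, g, hf, hg, hfg, hinv⟩ :=
    exists_coordinates (det_ne_zero_of_equilateral hL hPQ hQR hRP)
  obtain ⟨s, hs⟩ : ∃ s, s = 1 / L := ⟨_, rfl⟩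
  have hs0 : 0 < s := by rw [hs]; positivity
  rw [← hs] at hT
  let α : Fin n → ℝ := fun i => f (t i - s • P)
  let β : Fin n → ℝ := fun i => g (t i - s • P)
  have hcorner : ∀ i, t i = s • P + (P + α i • (Q - P) + β i • (R - P)) := fun i => by
    rw [← hfg (t i - s • P)]; abel
  have hTi : ∀ i (a b : ℝ), 0 ≤ a → 0 ≤ b → a + b ≤ 1 →
      P + (α i - s * a) • (Q - P) + (β i - s * b) • (R - P) ∈ T i := by
    intro i a b ha hb hab
    rw [hT]
    refine ⟨_, mem_convexHull_triple.2 ⟨a, b, ha, hb, hab, rfl⟩, ?_⟩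
    simp only
    rw [hcorner i]
    module
  have hin : ∀ i (a b : ℝ), 0 ≤ a → 0 ≤ b → a + b ≤ 1 →
      0 ≤ α i - s * a ∧ 0 ≤ β i - s * b ∧ (α i - s * a) + (β i - s * b) ≤ 1 := by
    intro i a b ha hb hab
    obtain ⟨c, d, hc, hd, hcd, h⟩ := mem_convexHull_triple.1 (hsub i (hTi i a b ha hb hab))
    have h1 := hinv (α i - s * a) (β i - s * b)
    rw [h, (hinv c d).1, (hinv c d).2] at h1
    rw [← h1.1, ← h1.2]
    exact ⟨hc, hd, hcd⟩
  have hinterior : ∀ i (x y : ℝ), x < α i → y < β i → α i + β i - s < x + y →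
      P + x • (Q - P) + y • (R - P) ∈ interior (T i) := by
    intro i x y hx hy hxy
    rw [mem_interior]
    refine ⟨{z | f z < α i} ∩ {z | g z < β i} ∩ {z | α i + β i - s < f z + g z}, ?_, ?_, ?_⟩
    · rintro z ⟨⟨h1, h2⟩, h3⟩
      simp only [Set.mem_ofPred_eq] at h1 h2 h3
      have := hTi i ((α i - f z) / s) ((β i - g z) / s) (div_nonneg (by linarith) hs0.le)
        (div_nonneg (by linarith) hs0.le)
        (by rw [← add_div, div_le_one hs0]; linarith)
      rw [mul_div_cancel₀ _ hs0.ne', mul_div_cancel₀ _ hs0.ne', sub_sub_cancel,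
        sub_sub_cancel, ← hfg z] at this
      exact this
    · exact ((isOpen_lt hf continuous_const).inter (isOpen_lt hg continuous_const)).inter
        (isOpen_lt continuous_const (hf.add hg))
    · refine ⟨⟨?_, ?_⟩, ?_⟩ <;> simp only [Set.mem_ofPred_eq, (hinv x y).1, (hinv x y).2] <;>
        assumption
  have key := card_mul_le_of_separated hs0 α β
    (fun i => by linarith [(hin i 1 0 (by norm_num) (by norm_num) (by norm_num)).1])
    (fun i => by linarith [(hin i 0 1 (by norm_num) (by norm_num) (by norm_num)).2.1])
    (fun i => by linarith [(hin i 0 0 (by norm_num) (by norm_num) (by norm_num)).2.2])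
    (by
      rintro i j hij ⟨h1, h2, h3⟩
      obtain ⟨x, y, ⟨a1, a2, a3⟩, b1, b2, b3⟩ := exists_common_point h1 h2 h3
      exact Set.notMem_empty _ ((hdisj i j hij).subset
        ⟨hinterior i x y a1 a2 a3, hinterior j x y b1 b2 b3⟩))
  rw [hs, one_div, inv_pow] at key
  have hL2 : 0 < L ^ 2 := by positivity
  field_simp at key
  linarith
end

section
/- For every ε > 0 there exists L₀ such that for all L ≥ L₀, one can place at least (2/3 − ε)·L² closed equilateral triangles of side length 1, with pairwise disjoint interiors, inside a closed equilateral triangle Δ of side length L, each with sides parallel to those of Δ but with opposite orientation. -/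
/-!
The density `2/3` comes from a lattice packing. In the affine coordinates `P + (x / L) (Q - P) +
(y / L) (R - P)`, the triangle `Δ` is `x, y ≥ 0, x + y ≤ L`, and the inverted unit triangle with
apex `(a, b)` is the set of points `(a - β, b - γ)` with `β, γ ≥ 0`, `β + γ ≤ 1`. It lies in `Δ`
as soon as `a, b ≥ 1` and `a + b ≤ L` (`invTriangle_subset`).

Two inverted unit triangles are separated by a line parallel to a side of `Δ` as soon as one of
`a`, `b`, `a + b` differs by at least `1` between them (`interior_inter_of_functional`,
`interior_inter_of_coords`). The apexes used are `a = 1 + p / 2`, `b = 1 + q / 2` with natural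
numbers `p ≡ q (mod 3)`. If neither `p`, `q` nor `p + q` differs by at least `2` between two such
pairs, then the differences of `p` and of `q` are congruent mod `3` and in `{-1, 0, 1}`, hence
equal, and their sum being in `{-1, 0, 1}` makes them zero.

Writing `p = r + 3 j`, `q = r + 3 (k - j)` with `r < 3` and `j ≤ k < K`, there are
`3 K (K + 1) / 2` such apexes, and all triangles lie in `Δ` when `3 K + 5 ≤ 2 L`. Taking `K` about
`2 L / 3` gives `2 L² / 3 - O(L)` triangles.
-/

local notation "𝔼" => EuclideanSpace ℝ (Fin 2)

/-- Apex of the inverted unit triangle with coordinates `(a, b)`. The shift `(1 + 1 / L) • P`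
places the point `x = P` of `Δ` at `P + (a / L) • (Q - P) + (b / L) • (R - P)` under
`x ↦ apex P Q R L a b - (1 / L) • x`. -/
noncomputable def apex (P Q R : 𝔼) (L a b : ℝ) : 𝔼 :=
  (1 + 1 / L) • P + (a / L) • (Q - P) + (b / L) • (R - P)

/-- The inverted unit triangle with apex coordinates `(a, b)`. -/
noncomputable def invTriangle (P Q R : 𝔼) (L a b : ℝ) : Set 𝔼 :=
  (fun x => apex P Q R L a b - (1 / L) • x) '' convexHull ℝ {P, Q, R}

lemma mem_triangle_iff (P Q R x : 𝔼) :
    x ∈ convexHull ℝ {P, Q, R} ↔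
      ∃ β γ : ℝ, 0 ≤ β ∧ 0 ≤ γ ∧ β + γ ≤ 1 ∧ x = P + β • (Q - P) + γ • (R - P) := by
  constructor
  · intro hx
    have hconv : Convex ℝ {x : 𝔼 | ∃ β γ : ℝ, 0 ≤ β ∧ 0 ≤ γ ∧ β + γ ≤ 1 ∧
        x = P + β • (Q - P) + γ • (R - P)} := by
      rintro _ ⟨β, γ, hβ, hγ, h, rfl⟩ _ ⟨β', γ', hβ', hγ', h', rfl⟩ s t hs ht hst
      refine ⟨s * β + t * β', s * γ + t * γ', by positivity, by positivity, by nlinarith, ?_⟩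
      obtain rfl : t = 1 - s := by linarith
      module
    refine convexHull_min ?_ hconv hx
    rintro y (rfl | rfl | rfl)
    · exact ⟨0, 0, le_rfl, le_rfl, by norm_num, by module⟩
    · exact ⟨1, 0, by norm_num, le_rfl, by norm_num, by module⟩
    · exact ⟨0, 1, le_rfl, by norm_num, by norm_num, by module⟩
  · rintro ⟨β, γ, hβ, hγ, h, rfl⟩
    rw [convexHull_insert (by simp), convexHull_pair, mem_convexJoin]
    simp only [Set.mem_singleton_iff, exists_eq_left]
    rcases (add_nonneg hβ hγ).eq_or_lt with h0 | h0
    · obtain rfl : β = 0 := by linarith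
      obtain rfl : γ = 0 := by linarith
      exact ⟨Q, left_mem_segment ℝ Q R, 1, 0, by norm_num, le_rfl, by norm_num, by module⟩
    · refine ⟨(β / (β + γ)) • Q + (γ / (β + γ)) • R,
        ⟨β / (β + γ), γ / (β + γ), by positivity, by positivity, by field_simp, rfl⟩,
        1 - (β + γ), β + γ, by linarith, h0.le, by ring, ?_⟩
      have h1 : (β + γ) * (β / (β + γ)) = β := by field_simp
      have h2 : (β + γ) * (γ / (β + γ)) = γ := by field_simp
      rw [smul_add, smul_smul, smul_smul, h1, h2]
      module

lemma apex_sub (P Q R : 𝔼) (L a b β γ : ℝ) :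
    apex P Q R L a b - (1 / L) • (P + β • (Q - P) + γ • (R - P)) =
      P + ((a - β) / L) • (Q - P) + ((b - γ) / L) • (R - P) := by
  unfold apex
  module

lemma invTriangle_subset (P Q R : 𝔼) {L a b : ℝ} (hL : 0 < L) (ha : 1 ≤ a) (hb : 1 ≤ b)
    (hab : a + b ≤ L) : invTriangle P Q R L a b ⊆ convexHull ℝ {P, Q, R} := by
  rintro _ ⟨x, hx, rfl⟩
  obtain ⟨β, γ, hβ, hγ, h, rfl⟩ := (mem_triangle_iff P Q R x).1 hx
  refine (mem_triangle_iff P Q R _).2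
    ⟨(a - β) / L, (b - γ) / L, div_nonneg (by linarith) hL.le, div_nonneg (by linarith) hL.le,
      ?_, apex_sub P Q R L a b β γ⟩
  rw [← add_div, div_le_one hL]
  linarith

/-- Two sets on opposite sides of a hyperplane have disjoint interiors: a nonzero functional is
open, so it maps each interior into an open half-line. -/
lemma interior_inter_of_separated (f : 𝔼 →L[ℝ] ℝ) (hf : f ≠ 0) {A B : Set 𝔼} {c : ℝ}
    (hA : ∀ z ∈ A, f z ≤ c) (hB : ∀ z ∈ B, c ≤ f z) : interior A ∩ interior B = ∅ := by
  have hopen := f.isOpenMap_of_ne_zero hf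
  refine Set.eq_empty_of_forall_notMem fun z ⟨hzA, hzB⟩ => ?_
  have h1 : f '' interior A ⊆ interior (Set.Iic c) :=
    interior_maximal (Set.image_subset_iff.2 fun y hy => hA y (interior_subset hy))
      (hopen _ isOpen_interior)
  have h2 : f z < c := by simpa using h1 ⟨z, hzA, rfl⟩
  exact absurd (hB z (interior_subset hzB)) (not_le.2 h2)

/-- Separation in the direction of a functional `f` which, up to the factor `s`, is the
combination `e₁ x + e₂ y` of the coordinates; it varies by at most `1` on a unit triangle. -/
lemma interior_inter_of_functional (P Q R : 𝔼) {L : ℝ} (hL : 0 < L) (f : 𝔼 →L[ℝ] ℝ)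
    {s e₁ e₂ a b a' b' : ℝ} (hs : 0 < s) (h₁ : 0 ≤ e₁) (h₁' : e₁ ≤ 1) (h₂ : 0 ≤ e₂) (h₂' : e₂ ≤ 1)
    (hQ : f (Q - P) = s * e₁) (hR : f (R - P) = s * e₂)
    (h : e₁ * a + e₂ * b + 1 ≤ e₁ * a' + e₂ * b') :
    interior (invTriangle P Q R L a b) ∩ interior (invTriangle P Q R L a' b') = ∅ := by
  have hf : f ≠ 0 := by
    rintro rfl
    obtain rfl : e₁ = 0 := by simpa [hs.ne'] using hQ.symm
    obtain rfl : e₂ = 0 := by simpa [hs.ne'] using hR.symm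
    linarith
  have key : ∀ a b β γ : ℝ, f (P + ((a - β) / L) • (Q - P) + ((b - γ) / L) • (R - P)) =
      f P + s / L * (e₁ * a + e₂ * b - (e₁ * β + e₂ * γ)) := by
    intro a b β γ
    rw [map_add, map_add, map_smul, map_smul, hQ, hR, smul_eq_mul, smul_eq_mul]
    ring
  have hsL : 0 ≤ s / L := by positivity
  refine interior_inter_of_separated f hf (c := f P + s / L * (e₁ * a + e₂ * b)) ?_ ?_
  · rintro _ ⟨x, hx, rfl⟩
    obtain ⟨β, γ, hβ, hγ, h, rfl⟩ := (mem_triangle_iff P Q R x).1 hx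
    simp only [apex_sub, key]
    gcongr
    nlinarith
  · rintro _ ⟨x, hx, rfl⟩
    obtain ⟨β, γ, hβ, hγ, h, rfl⟩ := (mem_triangle_iff P Q R x).1 hx
    simp only [apex_sub, key]
    gcongr
    nlinarith

lemma interior_inter_of_coords {P Q R : 𝔼} {L : ℝ} (hL : 0 < L) (hPQ : dist P Q = L)
    (hQR : dist Q R = L) (hRP : dist R P = L) {a b a' b' : ℝ}
    (h : a + 1 ≤ a' ∨ b + 1 ≤ b' ∨ a + b + 1 ≤ a' + b') :
    interior (invTriangle P Q R L a b) ∩ interior (invTriangle P Q R L a' b') = ∅ := by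
  have hUU : inner ℝ (Q - P) (Q - P) = L ^ 2 := by
    rw [real_inner_self_eq_norm_sq, ← dist_eq_norm, dist_comm, hPQ]
  have hVV : inner ℝ (R - P) (R - P) = L ^ 2 := by
    rw [real_inner_self_eq_norm_sq, ← dist_eq_norm, hRP]
  have hUV : inner ℝ (Q - P) (R - P) = L ^ 2 / 2 := by
    have h1 := norm_sub_sq_real (Q - P) (R - P)
    rw [sub_sub_sub_cancel_right, ← dist_eq_norm, hQR, ← real_inner_self_eq_norm_sq,
      ← real_inner_self_eq_norm_sq, hUU, hVV] at h1
    linarith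
  have hVU : inner ℝ (R - P) (Q - P) = L ^ 2 / 2 := by rw [real_inner_comm, hUV]
  have hs : 0 < 3 / 2 * L ^ 2 := by positivity
  -- The three functionals are the inner products with normals to the three sides of `Δ`.
  rcases h with h | h | h
  · refine interior_inter_of_functional P Q R hL
      (innerSL ℝ ((2 : ℝ) • (Q - P) - (R - P))) (e₁ := 1) (e₂ := 0) hs
      (by norm_num) (by norm_num) (by norm_num) (by norm_num) ?_ ?_ (by linarith)
    · rw [innerSL_apply_apply, inner_sub_left, real_inner_smul_left, hUU, hVU]; ring
    · rw [innerSL_apply_apply, inner_sub_left, real_inner_smul_left, hUV, hVV]; ring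
  · refine interior_inter_of_functional P Q R hL
      (innerSL ℝ ((2 : ℝ) • (R - P) - (Q - P))) (e₁ := 0) (e₂ := 1) hs
      (by norm_num) (by norm_num) (by norm_num) (by norm_num) ?_ ?_ (by linarith)
    · rw [innerSL_apply_apply, inner_sub_left, real_inner_smul_left, hUU, hVU]; ring
    · rw [innerSL_apply_apply, inner_sub_left, real_inner_smul_left, hUV, hVV]; ring
  · refine interior_inter_of_functional P Q R hL
      (innerSL ℝ ((Q - P) + (R - P))) (e₁ := 1) (e₂ := 1) hs
      (by norm_num) (by norm_num) (by norm_num) (by norm_num) ?_ ?_ (by linarith)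
    · rw [innerSL_apply_apply, inner_add_left, hUU, hVU]; ring
    · rw [innerSL_apply_apply, inner_add_left, hUV, hVV]; ring

/-- Labels `(r, k, j)` with `r < 3` and `j ≤ k < K` of the lattice points used. -/
abbrev Label (K : ℕ) : Type := Fin 3 × (Σ k : Fin K, Fin (k + 1))

/-- The lattice coordinate `p = r + 3 j` of the label `(r, k, j)`. -/
def Label.p {K : ℕ} (l : Label K) : ℤ := (l.1 : ℕ) + 3 * (l.2.2 : ℕ)

/-- The lattice coordinate `q = r + 3 (k - j)` of the label `(r, k, j)`. -/
def Label.q {K : ℕ} (l : Label K) : ℤ := (l.1 : ℕ) + 3 * (((l.2.1 : ℕ) : ℤ) - (l.2.2 : ℕ))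

lemma Label.card (K : ℕ) : (Fintype.card (Label K) : ℝ) = 3 / 2 * K * (K + 1) := by
  have h : ∀ K : ℕ, (∑ k : Fin K, (((k : ℕ) : ℝ) + 1)) = K * (K + 1) / 2 := by
    intro K
    induction K with
    | zero => simp
    | succ n ih =>
      rw [Fin.sum_univ_castSucc]
      simp only [Fin.val_castSucc, Fin.val_last, ih]
      push_cast
      ring
  simp only [Label, Fintype.card_prod, Fintype.card_sigma, Fintype.card_fin]
  push_cast
  rw [h]
  ring

lemma Label.bounds {K : ℕ} (l : Label K) : 0 ≤ l.p ∧ 0 ≤ l.q ∧ l.p + l.q ≤ 3 * K + 1 := by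
  obtain ⟨r, k, j⟩ := l
  have := r.2; have := k.2; have := j.2
  simp only [Label.p, Label.q]
  omega

lemma Label.separated {K : ℕ} {l m : Label K} (h : l ≠ m) :
    (l.p + 2 ≤ m.p ∨ l.q + 2 ≤ m.q ∨ l.p + l.q + 2 ≤ m.p + m.q) ∨
      (m.p + 2 ≤ l.p ∨ m.q + 2 ≤ l.q ∨ m.p + m.q + 2 ≤ l.p + l.q) := by
  obtain ⟨⟨r, hr⟩, ⟨k, hk⟩, ⟨j, hj⟩⟩ := l
  obtain ⟨⟨r', hr'⟩, ⟨k', hk'⟩, ⟨j', hj'⟩⟩ := m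
  by_contra hc
  apply h
  simp only [Label.p, Label.q] at hc hj hj'
  -- The differences of `p` and `q` are congruent mod `3` and at most `1` in size, so they agree.
  have h1 : (2 * j : ℤ) - k = 2 * j' - k' := by omega
  have h2 : (r : ℤ) + 3 * j = r' + 3 * j' := by omega
  obtain rfl : r = r' := by omega
  obtain rfl : k = k' := by omega
  obtain rfl : j = j' := by omega
  rfl

theorem stmt_5 (ε : ℝ) (hε : 0 < ε) :
    ∃ L₀ : ℝ, ∀ L : ℝ, L₀ ≤ L → 0 < L →
      ∀ P Q R : EuclideanSpace ℝ (Fin 2),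
        dist P Q = L → dist Q R = L → dist R P = L →
        ∃ n : ℕ, (2 / 3 - ε) * L ^ 2 ≤ (n : ℝ) ∧
          ∃ t : Fin n → EuclideanSpace ℝ (Fin 2),
            -- each translated, point-reflected, `1/L`-scaled copy of `Δ` lies inside `Δ`
            (∀ i, (fun x => t i - (1 / L) • x) '' convexHull ℝ {P, Q, R} ⊆
                convexHull ℝ {P, Q, R}) ∧
            -- the small triangles have pairwise disjoint interiors
            (∀ i j, i ≠ j →
              interior ((fun x => t i - (1 / L) • x) '' convexHull ℝ {P, Q, R}) ∩
                interior ((fun x => t j - (1 / L) • x) '' convexHull ℝ {P, Q, R}) = ∅) := by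
  -- `13 / (3 ε)` absorbs the linear loss `13 L / 3` in the count; `4` makes `2 L - 8 ≥ 0`.
  refine ⟨max 4 (13 / (3 * ε)), fun L hL₀ hL P Q R hPQ hQR hRP => ?_⟩
  have hL4 : 4 ≤ L := (le_max_left _ _).trans hL₀
  have hLε : 13 ≤ L * (3 * ε) := (div_le_iff₀ (by positivity)).1 ((le_max_right _ _).trans hL₀)
  obtain ⟨K, hK⟩ : ∃ K : ℕ, K = ⌊(2 * L - 5) / 3⌋₊ := ⟨_, rfl⟩
  have hK1 : 3 * (K : ℝ) + 5 ≤ 2 * L := by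
    have := Nat.floor_le (a := (2 * L - 5) / 3) (by linarith)
    rw [← hK] at this
    linarith
  have hK2 : 2 * L - 8 ≤ 3 * (K : ℝ) := by
    have := Nat.lt_floor_add_one ((2 * L - 5) / 3)
    rw [← hK] at this
    linarith
  have e := (Fintype.equivFin (Label K)).symm
  refine ⟨Fintype.card (Label K), ?_, fun i =>
    apex P Q R L (1 + ((e i).p : ℝ) / 2) (1 + ((e i).q : ℝ) / 2), fun i => ?_, fun i j hij => ?_⟩
  · rw [Label.card]
    have h1 : (2 * L - 8) * (2 * L - 5) ≤ (3 * (K : ℝ)) * (3 * K + 3) :=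
      mul_le_mul hK2 (by linarith) (by linarith) (by positivity)
    nlinarith
  · obtain ⟨hp, hq, hpq⟩ := (e i).bounds
    have hp' : (0 : ℝ) ≤ (e i).p := by exact_mod_cast hp
    have hq' : (0 : ℝ) ≤ (e i).q := by exact_mod_cast hq
    have hpq' : ((e i).p : ℝ) + (e i).q ≤ 3 * K + 1 := by exact_mod_cast hpq
    exact invTriangle_subset P Q R hL (by linarith) (by linarith) (by linarith)
  · have aux : ∀ l m : Label K,
        (l.p + 2 ≤ m.p ∨ l.q + 2 ≤ m.q ∨ l.p + l.q + 2 ≤ m.p + m.q) →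
        interior (invTriangle P Q R L (1 + (l.p : ℝ) / 2) (1 + (l.q : ℝ) / 2)) ∩
          interior (invTriangle P Q R L (1 + (m.p : ℝ) / 2) (1 + (m.q : ℝ) / 2)) = ∅ := by
      intro l m h
      refine interior_inter_of_coords hL hPQ hQR hRP ?_
      rcases h with h | h | h
      · have h' : (l.p : ℝ) + 2 ≤ m.p := by exact_mod_cast h
        exact Or.inl (by linarith)
      · have h' : (l.q : ℝ) + 2 ≤ m.q := by exact_mod_cast h
        exact Or.inr (Or.inl (by linarith))
      · have h' : (l.p : ℝ) + l.q + 2 ≤ m.p + m.q := by exact_mod_cast h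
        exact Or.inr (Or.inr (by linarith))
    rcases Label.separated (e.injective.ne hij) with h | h
    · exact aux _ _ h
    · exact (Set.inter_comm _ _).trans (aux _ _ h)
end

section
/- Let A, B, C be points in ℤ² such that the triangle with vertices A, B, C has area 2021, i.e., |(B−A)×(C−A)| = 4042, where (x₁,y₁)×(x₂,y₂) = x₁y₂ − x₂y₁. Then ‖A‖₁ + ‖B‖₁ + ‖C‖₁ ≥ 128, where ‖(x,y)‖₁ = |x| + |y|. Moreover, this bound is attained: there exist A, B, C ∈ ℤ² with |(B−A)×(C−A)| = 4042 and ‖A‖₁ + ‖B‖₁ + ‖C‖₁ = 128. -/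
/-!
Expanding the doubled signed area of a triangle with vertices `(xᵢ, yᵢ)` gives a sum of terms
`± xᵢ yⱼ` in which every ordered pair `i ≠ j` occurs exactly once. Hence its absolute value is at most
`X * Y`, where `X = ∑ |xᵢ|` and `Y = ∑ |yⱼ|`, and by AM-GM at most `(X + Y)² / 4`. Since
`127² < 4 * 4042`, doubled area `4042` forces `X + Y ≥ 128`.
-/

theorem abs_cross_le (x₁ y₁ x₂ y₂ x₃ y₃ : ℤ) :
    |(x₂ - x₁) * (y₃ - y₁) - (x₃ - x₁) * (y₂ - y₁)| ≤
      (|x₁| + |x₂| + |x₃|) * (|y₁| + |y₂| + |y₃|) := by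
  have hpos (a b : ℤ) : a * b ≤ |a| * |b| := (le_abs_self _).trans_eq (abs_mul a b)
  have hneg (a b : ℤ) : -(a * b) ≤ |a| * |b| := (neg_le_abs _).trans_eq (abs_mul a b)
  have hdiag (a b : ℤ) : 0 ≤ |a| * |b| := by positivity
  rw [abs_le]
  constructor
  · linarith [hneg x₁ y₂, hpos x₂ y₁, hneg x₂ y₃, hpos x₃ y₂, hneg x₃ y₁, hpos x₁ y₃,
      hdiag x₁ y₁, hdiag x₂ y₂, hdiag x₃ y₃]
  · linarith [hpos x₁ y₂, hneg x₂ y₁, hpos x₂ y₃, hneg x₃ y₂, hpos x₃ y₁, hneg x₁ y₃,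
      hdiag x₁ y₁, hdiag x₂ y₂, hdiag x₃ y₃]

theorem stmt_7 :
    (∀ A B C : ℤ × ℤ,
      |(B.1 - A.1) * (C.2 - A.2) - (C.1 - A.1) * (B.2 - A.2)| = 4042 →
      128 ≤ |A.1| + |A.2| + |B.1| + |B.2| + |C.1| + |C.2|) ∧
    (∃ A B C : ℤ × ℤ,
      |(B.1 - A.1) * (C.2 - A.2) - (C.1 - A.1) * (B.2 - A.2)| = 4042 ∧
      |A.1| + |A.2| + |B.1| + |B.2| + |C.1| + |C.2| = 128) := by
  constructor
  · intro A B C h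
    have hXY := abs_cross_le A.1 A.2 B.1 B.2 C.1 C.2
    rw [h] at hXY
    have hX : 0 ≤ |A.1| + |B.1| + |C.1| := by positivity
    have hY : 0 ≤ |A.2| + |B.2| + |C.2| := by positivity
    have hsum : |A.1| + |A.2| + |B.1| + |B.2| + |C.1| + |C.2| =
        (|A.1| + |B.1| + |C.1|) + (|A.2| + |B.2| + |C.2|) := by ring
    rw [hsum]
    generalize |A.1| + |B.1| + |C.1| = X at *
    generalize |A.2| + |B.2| + |C.2| = Y at *
    by_contra! hlt
    nlinarith [sq_nonneg (X - Y), 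
      mul_self_le_mul_self (add_nonneg hX hY) (Int.le_of_lt_add_one hlt : X + Y ≤ 127)]
  · exact ⟨(-15, -3), (46, 0), (0, 64), by norm_num⟩
end

section
/- Let A, B, C be points in ℤ² with |(B−A)×(C−A)| = 4042 (triangle area 2021), and let w and ℓ be the width and height of the bounding box of triangle ABC. Then 2021 ≤ (1/2)·ℓ·w ≤ (1/8)·(ℓ + w)², and consequently ℓ + w ≥ 128. -/
/-! The cross product of a triangle is, up to sign, unchanged by permuting the vertices, so the
vertices can be sorted by ordinate. Cutting the triangle along the horizontal line through the
middle vertex then bounds the cross product by width times height (`cross_le_of_sorted`), whence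
`4042 ≤ l * w`. The second inequality is AM-GM. Together they give `(l + w) ^ 2 ≥ 16168 > 127 ^ 2`,
so the integer `l + w` is at least `128`. -/

/-- With the ordinates sorted, the cross product is
`(x₂ - x₁) * (y₃ - y₂) + (x₂ - x₃) * (y₂ - y₁)`, and the nonnegative weights
`y₃ - y₂`, `y₂ - y₁` add up to at most `l`. -/
lemma cross_le_of_sorted {x₁ x₂ x₃ y₁ y₂ y₃ w l : ℤ} (h₁₂ : y₁ ≤ y₂) (h₂₃ : y₂ ≤ y₃)
    (hl : y₃ - y₁ ≤ l) (hx₁ : |x₂ - x₁| ≤ w) (hx₃ : |x₂ - x₃| ≤ w) :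
    |(x₂ - x₁) * (y₃ - y₁) - (x₃ - x₁) * (y₂ - y₁)| ≤ l * w := by
  have hw : 0 ≤ w := (abs_nonneg _).trans hx₁
  rw [abs_le] at hx₁ hx₃ ⊢
  have p : 0 ≤ y₂ - y₁ := by linarith
  have q : 0 ≤ y₃ - y₂ := by linarith
  have e := mul_le_mul_of_nonneg_right hl hw
  have a := mul_le_mul_of_nonneg_right hx₁.1 q
  have b := mul_le_mul_of_nonneg_right hx₁.2 q
  have c := mul_le_mul_of_nonneg_right hx₃.1 p
  have d := mul_le_mul_of_nonneg_right hx₃.2 p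
  constructor <;> linarith

theorem stmt_9 (A B C : ℤ × ℤ)
    (harea : |(B.1 - A.1) * (C.2 - A.2) - (C.1 - A.1) * (B.2 - A.2)| = 4042)
    (w l : ℤ)
    (hw : w = max A.1 (max B.1 C.1) - min A.1 (min B.1 C.1))
    (hl : l = max A.2 (max B.2 C.2) - min A.2 (min B.2 C.2)) :
    (2021 : ℝ) ≤ 1 / 2 * (l : ℝ) * (w : ℝ) ∧
    1 / 2 * (l : ℝ) * (w : ℝ) ≤ 1 / 8 * ((l : ℝ) + (w : ℝ)) ^ 2 ∧
    128 ≤ l + w := by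
  obtain ⟨a, a'⟩ := A
  obtain ⟨b, b'⟩ := B
  obtain ⟨c, c'⟩ := C
  dsimp only at harea hw hl
  have hab : |a - b| ≤ w := by rw [abs_le]; omega
  have hbc : |b - c| ≤ w := by rw [abs_le]; omega
  have hca : |c - a| ≤ w := by rw [abs_le]; omega
  have hba : |b - a| ≤ w := by rwa [abs_sub_comm]
  have hcb : |c - b| ≤ w := by rwa [abs_sub_comm]
  have hac : |a - c| ≤ w := by rwa [abs_sub_comm]
  have hl0 : 0 ≤ l := by omega
  have hw0 : 0 ≤ w := (abs_nonneg _).trans hab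
  have key : 4042 ≤ l * w := by
    rw [← harea]
    rcases le_total a' b' with h₁ | h₁ <;> rcases le_total b' c' with h₂ | h₂ <;>
      rcases le_total a' c' with h₃ | h₃
    · exact cross_le_of_sorted h₁ h₂ (by omega) hba hbc
    · exact cross_le_of_sorted h₁ h₂ (by omega) hba hbc
    · have := cross_le_of_sorted h₃ h₂ (l := l) (by omega) hca hcb
      rw [abs_le] at this ⊢
      constructor <;> linarith
    · have := cross_le_of_sorted h₃ h₁ (l := l) (by omega) hac hab
      rw [abs_le] at this ⊢
      constructor <;> linarith
    · have := cross_le_of_sorted h₁ h₃ (l := l) (by omega) hab hac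
      rw [abs_le] at this ⊢
      constructor <;> linarith
    · have := cross_le_of_sorted h₂ h₃ (l := l) (by omega) hcb hca
      rw [abs_le] at this ⊢
      constructor <;> linarith
    · have := cross_le_of_sorted h₂ h₁ (l := l) (by omega) hbc hba
      rw [abs_le] at this ⊢
      constructor <;> linarith
    · have := cross_le_of_sorted h₂ h₁ (l := l) (by omega) hbc hba
      rw [abs_le] at this ⊢
      constructor <;> linarith
  refine ⟨?_, ?_, ?_⟩
  · have : (4042 : ℝ) ≤ l * w := by exact_mod_cast key
    linarith
  · nlinarith [sq_nonneg ((l : ℝ) - w)]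
  · by_contra! h
    nlinarith [sq_nonneg (l - w)]
end

section
/- A finite set S of positive integers is called good if for each s ∈ S and each positive divisor d of s, there exists a unique t ∈ S with gcd(s,t) = d. The set of possible cardinalities of good sets is exactly {0} ∪ {2^k : k ≥ 0}, i.e., |S| ∈ {0, 1, 2, 4, 8, …} for every good set S, and each such value is attained by some good set. -/
/-!
For `s` in a good set `S`, the map `t ↦ gcd s t` is a bijection from `S` onto the divisors of `s`
(`GoodSet.card_filter`), so `#S = τ(s)`. If the prime `p` divides `s` with exponent `e`, the same
bijection matches the elements of `S` prime to `p` with the divisors of `s` prime to `p`, whence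
`#S = (e + 1) * N` with `N = #{t ∈ S | p ∤ t}` independent of `s`. So all multiples of `p` in `S`
have the same `p`-adic valuation `e`. Choosing `t ∈ S` with `gcd s t = p` gives a multiple of `p`;
both valuations equal `e`, while their minimum is `1`. Hence `e = 1`, every element of `S` is
squarefree, and `#S = τ(s)` is a power of two.

Conversely, if `S` is good and `p ≠ q` are primes dividing no element of `S`, then `pS ∪ qS` is
good of twice the size (`GoodSet.double`); starting from `{1}` this yields every power of two.
-/


/-- A finite set `S` of positive integers is *good* if for each `s ∈ S` and each
positive divisor `d` of `s`, there is a unique `t ∈ S` with `gcd s t = d`. -/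
def GoodSet (S : Finset ℕ) : Prop :=
  (∀ s ∈ S, 0 < s) ∧
  ∀ s ∈ S, ∀ d : ℕ, 0 < d → d ∣ s → ∃! t, t ∈ S ∧ Nat.gcd s t = d

/-- The bijection `t ↦ gcd s t` from `S` to the divisors of `s`, restricted to a property that
`t` and `gcd s t` share. -/
lemma GoodSet.card_filter {S : Finset ℕ} (hS : GoodSet S) {s : ℕ} (hs : s ∈ S)
    (P : ℕ → Prop) [DecidablePred P] (hP : ∀ t ∈ S, P t ↔ P (Nat.gcd s t)) :
    (S.filter P).card = (s.divisors.filter P).card := by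
  have hs0 := hS.1 s hs
  refine Finset.card_bij (fun t _ => Nat.gcd s t) ?_ ?_ ?_
  · intro t ht
    rw [Finset.mem_filter] at ht
    simp only [Finset.mem_filter, Nat.mem_divisors]
    exact ⟨⟨Nat.gcd_dvd_left _ _, hs0.ne'⟩, (hP t ht.1).1 ht.2⟩
  · intro a ha b hb hab
    rw [Finset.mem_filter] at ha hb
    exact (hS.2 s hs (Nat.gcd s a) (Nat.gcd_pos_of_pos_left _ hs0)
      (Nat.gcd_dvd_left _ _)).unique ⟨ha.1, rfl⟩ ⟨hb.1, hab.symm⟩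
  · intro d hd
    simp only [Finset.mem_filter, Nat.mem_divisors] at hd
    obtain ⟨t, ⟨ht, hd'⟩, -⟩ := hS.2 s hs d (Nat.pos_of_dvd_of_pos hd.1.1 hs0) hd.1.1
    exact ⟨t, Finset.mem_filter.2 ⟨ht, (hP t ht).2 (hd' ▸ hd.2)⟩, hd'⟩

lemma GoodSet.card_eq {S : Finset ℕ} (hS : GoodSet S) {s : ℕ} (hs : s ∈ S) :
    S.card = s.divisors.card := by
  simpa using hS.card_filter hs (fun _ => True) (by simp)

lemma divisors_filter_not_dvd {s p : ℕ} (hs : s ≠ 0) (hp : p.Prime) :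
    s.divisors.filter (fun d => ¬ p ∣ d) = (s / p ^ s.factorization p).divisors := by
  ext d
  simp only [Finset.mem_filter, Nat.mem_divisors]
  constructor
  · rintro ⟨⟨h, -⟩, hpd⟩
    refine ⟨?_, (Nat.ordCompl_pos p hs).ne'⟩
    have hc : Nat.Coprime d (p ^ s.factorization p) :=
      Nat.Coprime.pow_right _ ((Nat.Prime.coprime_iff_not_dvd hp).2 hpd).symm
    refine hc.dvd_of_dvd_mul_left ?_
    rwa [Nat.ordProj_mul_ordCompl_eq_self]
  · rintro ⟨h, -⟩
    exact ⟨⟨h.trans (Nat.ordCompl_dvd s p), hs⟩,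
      fun hpd => Nat.not_dvd_ordCompl hp hs (hpd.trans h)⟩

/-- The elements of `S` prime to `p` form a fraction `1 / (e + 1)` of `S`, where `e` is the
valuation at `p` of any multiple of `p` in `S`. -/
lemma GoodSet.card_eq_mul {S : Finset ℕ} (hS : GoodSet S) {s p : ℕ} (hs : s ∈ S)
    (hp : p.Prime) (hps : p ∣ s) :
    S.card = (s.factorization p + 1) * (S.filter (fun d => ¬ p ∣ d)).card := by
  have hs0 := (hS.1 s hs).ne'
  rw [hS.card_filter hs (fun d => ¬ p ∣ d)
    (fun t _ => by simp [Nat.dvd_gcd_iff, hps]), divisors_filter_not_dvd hs0 hp, hS.card_eq hs]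
  conv_lhs => rw [← Nat.ordProj_mul_ordCompl_eq_self s p]
  rw [Nat.Coprime.card_divisors_mul, Nat.divisors_prime_pow hp, Finset.card_map,
    Finset.card_range]
  exact Nat.Coprime.pow_left _ (Nat.coprime_ordCompl hp hs0)

lemma GoodSet.factorization_eq_one {S : Finset ℕ} (hS : GoodSet S) {s p : ℕ} (hs : s ∈ S)
    (hp : p.Prime) (hps : p ∣ s) : s.factorization p = 1 := by
  obtain ⟨t, ⟨ht, hst⟩, -⟩ := hS.2 s hs p hp.pos hps
  have hpt : p ∣ t := hst ▸ Nat.gcd_dvd_right s t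
  have h1 := hS.card_eq_mul hs hp hps
  have h2 := hS.card_eq_mul ht hp hpt
  have hS0 : 0 < S.card := Finset.card_pos.2 ⟨s, hs⟩
  have hN : 0 < (S.filter (fun d => ¬ p ∣ d)).card :=
    Nat.pos_of_ne_zero fun h => by rw [h] at h1; omega
  have he : s.factorization p = t.factorization p := by
    have := Nat.eq_of_mul_eq_mul_right hN (h1.symm.trans h2)
    omega
  have hm := congrArg (fun n => n.factorization p) hst
  simp only [Nat.factorization_gcd (hS.1 s hs).ne' (hS.1 t ht).ne', Finsupp.inf_apply,
    hp.factorization_self] at hm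
  rwa [← he, inf_idem] at hm

lemma GoodSet.card_eq_two_pow {S : Finset ℕ} (hS : GoodSet S) {s : ℕ} (hs : s ∈ S) :
    S.card = 2 ^ s.primeFactors.card := by
  rw [hS.card_eq hs, Nat.card_divisors (hS.1 s hs).ne', ← Finset.prod_const]
  refine Finset.prod_congr rfl fun p hp => ?_
  rw [hS.factorization_eq_one hs (Nat.prime_of_mem_primeFactors hp)
    (Nat.dvd_of_mem_primeFactors hp)]

/-- Unique solvability of `gcd (p * s) t = d` in `pS ∪ qS`: the solution lies in `pS` or in `qS`
according to whether `p ∣ d`. -/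
lemma GoodSet.existsUnique_double {S : Finset ℕ} (hS : GoodSet S) {p q s d : ℕ} (hp : p.Prime)
    (hq : q.Prime) (hpq : p ≠ q) (hpS : ∀ s ∈ S, ¬ p ∣ s) (hqS : ∀ s ∈ S, ¬ q ∣ s)
    (hs : s ∈ S) (hd : 0 < d) (hds : d ∣ p * s) :
    ∃! t, ((∃ u ∈ S, p * u = t) ∨ ∃ u ∈ S, q * u = t) ∧ Nat.gcd (p * s) t = d := by
  have hcross : ∀ u ∈ S, Nat.gcd (p * s) (q * u) = Nat.gcd s u := by
    intro u hu
    have h1 : Nat.Coprime p (q * u) := Nat.Coprime.mul_right ((Nat.coprime_primes hp hq).2 hpq)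
      ((Nat.Prime.coprime_iff_not_dvd hp).2 (hpS u hu))
    have h2 : Nat.Coprime q s := (Nat.Prime.coprime_iff_not_dvd hq).2 (hqS s hs)
    rw [Nat.Coprime.gcd_mul_left_cancel _ h1, Nat.Coprime.gcd_mul_left_cancel_right _ h2]
  have hnd : ∀ u, ¬ p ∣ Nat.gcd s u := fun u h => hpS s hs (h.trans (Nat.gcd_dvd_left _ _))
  by_cases hpd : p ∣ d
  · obtain ⟨e, rfl⟩ := hpd
    obtain ⟨t, ⟨ht, hte⟩, huniq⟩ := hS.2 s hs e (Nat.pos_of_mul_pos_left hd)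
      (Nat.dvd_of_mul_dvd_mul_left hp.pos hds)
    refine ⟨p * t, ⟨Or.inl ⟨t, ht, rfl⟩, by rw [Nat.gcd_mul_left, hte]⟩, ?_⟩
    rintro _ ⟨⟨u, hu, rfl⟩ | ⟨u, hu, rfl⟩, h⟩
    · rw [Nat.gcd_mul_left] at h
      rw [huniq u ⟨hu, Nat.eq_of_mul_eq_mul_left hp.pos h⟩]
    · rw [hcross u hu] at h
      exact absurd (h ▸ dvd_mul_right p e) (hnd u)
  · obtain ⟨t, ⟨ht, hte⟩, huniq⟩ := hS.2 s hs d hd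
      (((Nat.Prime.coprime_iff_not_dvd hp).2 hpd).symm.dvd_of_dvd_mul_left hds)
    refine ⟨q * t, ⟨Or.inr ⟨t, ht, rfl⟩, by rw [hcross t ht, hte]⟩, ?_⟩
    rintro _ ⟨⟨u, hu, rfl⟩ | ⟨u, hu, rfl⟩, h⟩
    · rw [Nat.gcd_mul_left] at h
      exact absurd (h ▸ dvd_mul_right p _) hpd
    · rw [hcross u hu] at h
      rw [huniq u ⟨hu, h⟩]

lemma GoodSet.double {S : Finset ℕ} (hS : GoodSet S) {p q : ℕ} (hp : p.Prime)
    (hq : q.Prime) (hpq : p ≠ q) (hpS : ∀ s ∈ S, ¬ p ∣ s) (hqS : ∀ s ∈ S, ¬ q ∣ s) :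
    GoodSet (S.image (p * ·) ∪ S.image (q * ·)) ∧
      (S.image (p * ·) ∪ S.image (q * ·)).card = 2 * S.card := by
  refine ⟨⟨?_, ?_⟩, ?_⟩
  · intro s hs
    simp only [Finset.mem_union, Finset.mem_image] at hs
    obtain ⟨u, hu, rfl⟩ | ⟨u, hu, rfl⟩ := hs
    · exact Nat.mul_pos hp.pos (hS.1 u hu)
    · exact Nat.mul_pos hq.pos (hS.1 u hu)
  · intro s hs d hd hds
    simp only [Finset.mem_union, Finset.mem_image] at hs ⊢
    obtain ⟨u, hu, rfl⟩ | ⟨u, hu, rfl⟩ := hs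
    · exact hS.existsUnique_double hp hq hpq hpS hqS hu hd hds
    · have h := hS.existsUnique_double hq hp hpq.symm hqS hpS hu hd hds
      simpa only [or_comm] using h
  · rw [Finset.card_union_of_disjoint, Finset.card_image_of_injective _
      (mul_right_injective₀ hp.ne_zero), Finset.card_image_of_injective _
      (mul_right_injective₀ hq.ne_zero), two_mul]
    rw [Finset.disjoint_left]
    intro a ha hb
    simp only [Finset.mem_image] at ha hb
    obtain ⟨u, hu, rfl⟩ := ha
    obtain ⟨v, hv, h⟩ := hb
    rcases (Nat.Prime.dvd_mul hp).1 (h ▸ dvd_mul_right p u : p ∣ q * v) with h' | h'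
    · exact hpq ((Nat.prime_dvd_prime_iff_eq hp hq).1 h')
    · exact hpS v hv h'

lemma exists_goodSet_card_two_pow (k : ℕ) : ∃ S : Finset ℕ, GoodSet S ∧ S.card = 2 ^ k := by
  induction k with
  | zero =>
    refine ⟨{1}, ⟨by simp, ?_⟩, by simp⟩
    intro s hs d _ hds
    rw [Finset.mem_singleton] at hs
    subst hs
    rw [Nat.dvd_one] at hds
    subst hds
    exact ⟨1, by simp, by simp⟩
  | succ k ih =>
    obtain ⟨S, hS, hcard⟩ := ih
    -- Primes exceeding every element of `S` divide none of its elements.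
    obtain ⟨p, hpM, hp⟩ := Nat.exists_infinite_primes (S.sup id + 1)
    obtain ⟨q, hqp, hq⟩ := Nat.exists_infinite_primes (p + 1)
    have hle : ∀ s ∈ S, s ≤ S.sup id := fun s hs => Finset.le_sup (f := id) hs
    have key := hS.double hp hq (by omega)
      (fun s hs h => by have := Nat.le_of_dvd (hS.1 s hs) h; have := hle s hs; omega)
      (fun s hs h => by have := Nat.le_of_dvd (hS.1 s hs) h; have := hle s hs; omega)
    exact ⟨_, key.1, by rw [key.2, hcard, pow_succ, mul_comm]⟩

theorem stmt_10 :
    {n : ℕ | ∃ S : Finset ℕ, GoodSet S ∧ S.card = n} =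
      {0} ∪ {n : ℕ | ∃ k : ℕ, n = 2 ^ k} := by
  ext n
  simp only [Set.mem_ofPred_eq, Set.mem_union, Set.mem_singleton_iff]
  constructor
  · rintro ⟨S, hS, rfl⟩
    rcases S.eq_empty_or_nonempty with rfl | ⟨s, hs⟩
    · exact Or.inl rfl
    · exact Or.inr ⟨_, hS.card_eq_two_pow hs⟩
  · rintro (rfl | ⟨k, rfl⟩)
    · exact ⟨∅, ⟨by simp, by simp⟩, rfl⟩
    · exact exists_goodSet_card_two_pow k
end

section
/- Let k be a positive integer and let p₁, q₁, …, p_k, q_k be 2k pairwise distinct primes. For subsets I, J of {1,…,k}, write s(I,J) = (∏_{i∈I} p_i)·(∏_{j∈J} q_j). Then the set S = { s(I, {1,…,k} \ I) : I ⊆ {1,…,k} } has exactly 2^k elements and is good: for each s ∈ S and each positive divisor d of s there is a unique t ∈ S with gcd(s,t) = d. -/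
/-- The prime chosen by `I` at the index `i`: `p i` if `i ∈ I`, and `q i` otherwise. -/
def choiceFactor {k : ℕ} (p q : Fin k → ℕ) (I : Finset (Fin k)) (i : Fin k) : ℕ :=
  if i ∈ I then p i else q i

section

variable {k : ℕ} {p q : Fin k → ℕ}

theorem prod_mul_prod_compl_eq (I : Finset (Fin k)) :
    (∏ i ∈ I, p i) * ∏ j ∈ Iᶜ, q j = ∏ i, choiceFactor p q I i := by
  rw [← Finset.prod_mul_prod_compl I (choiceFactor p q I)]
  congr 1
  · exact Finset.prod_congr rfl fun i hi => by simp [choiceFactor, hi]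
  · refine Finset.prod_congr rfl fun i hi => ?_
    rw [Finset.mem_compl] at hi
    simp [choiceFactor, hi]

theorem choiceFactor_prime (hp : ∀ i, (p i).Prime) (hq : ∀ i, (q i).Prime)
    (I : Finset (Fin k)) (i : Fin k) : (choiceFactor p q I i).Prime := by
  unfold choiceFactor
  split_ifs
  exacts [hp i, hq i]

theorem choiceFactor_eq_iff (hpinj : Function.Injective p) (hqinj : Function.Injective q)
    (hpq : ∀ i j, p i ≠ q j) (I J : Finset (Fin k)) (i j : Fin k) :
    choiceFactor p q I i = choiceFactor p q J j ↔ i = j ∧ (i ∈ I ↔ j ∈ J) := by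
  have hqp : ∀ i j, q i ≠ p j := fun i j h => hpq j i h.symm
  unfold choiceFactor
  split_ifs with h1 h2 h2 <;> simp [h1, h2, hpinj.eq_iff, hqinj.eq_iff, hpq, hqp]

theorem factor_dvd_prod_iff (hp : ∀ i, (p i).Prime) (hq : ∀ i, (q i).Prime)
    (hpinj : Function.Injective p) (hqinj : Function.Injective q)
    (hpq : ∀ i j, p i ≠ q j) (I J : Finset (Fin k)) (i : Fin k) :
    choiceFactor p q I i ∣ ∏ j, choiceFactor p q J j ↔ (i ∈ I ↔ i ∈ J) := by
  rw [(choiceFactor_prime hp hq I i).prime.dvd_finsetProd_iff]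
  simp [Nat.prime_dvd_prime_iff_eq (choiceFactor_prime hp hq _ _) (choiceFactor_prime hp hq _ _),
    choiceFactor_eq_iff hpinj hqinj hpq]

theorem squarefree_prod_choiceFactor (hp : ∀ i, (p i).Prime) (hq : ∀ i, (q i).Prime)
    (hpinj : Function.Injective p) (hqinj : Function.Injective q)
    (hpq : ∀ i j, p i ≠ q j) (I : Finset (Fin k)) :
    Squarefree (∏ i, choiceFactor p q I i) := by
  refine Finset.squarefree_prod_of_pairwise_isCoprime ?_
    fun i _ => (choiceFactor_prime hp hq I i).prime.squarefree
  intro i _ j _ hij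
  refine Nat.coprime_iff_isRelPrime.1 ?_
  rw [Nat.coprime_primes (choiceFactor_prime hp hq I i) (choiceFactor_prime hp hq I j)]
  simp [choiceFactor_eq_iff hpinj hqinj hpq, hij]

theorem gcd_prod_eq_iff (hp : ∀ i, (p i).Prime) (hq : ∀ i, (q i).Prime)
    (hpinj : Function.Injective p) (hqinj : Function.Injective q)
    (hpq : ∀ i j, p i ≠ q j) (I J : Finset (Fin k)) {d : ℕ}
    (hd : d ∣ ∏ i, choiceFactor p q I i) :
    Nat.gcd (∏ i, choiceFactor p q I i) (∏ i, choiceFactor p q J i) = d ↔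
      ∀ i, (i ∈ I ↔ i ∈ J) ↔ choiceFactor p q I i ∣ d := by
  have hs := squarefree_prod_choiceFactor hp hq hpinj hqinj hpq I
  have key : ∀ i, choiceFactor p q I i ∣
      Nat.gcd (∏ i, choiceFactor p q I i) (∏ i, choiceFactor p q J i) ↔ (i ∈ I ↔ i ∈ J) := by
    intro i
    rw [Nat.dvd_gcd_iff, factor_dvd_prod_iff hp hq hpinj hqinj hpq,
      factor_dvd_prod_iff hp hq hpinj hqinj hpq]
    simp
  constructor
  · intro h i
    rw [← key i, h]
  · intro h
    -- Both sides are squarefree divisors of `s I`, so it suffices to compare prime divisors,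
    -- all of which are of the form `choiceFactor p q I i`.
    rw [Nat.Squarefree.ext_iff (hs.squarefree_of_dvd (Nat.gcd_dvd_left _ _))
      (hs.squarefree_of_dvd hd)]
    intro x hx
    by_cases hxs : x ∣ ∏ i, choiceFactor p q I i
    · obtain ⟨i, -, hi⟩ := (hx.prime.dvd_finsetProd_iff _).1 hxs
      rw [Nat.prime_dvd_prime_iff_eq hx (choiceFactor_prime hp hq I i)] at hi
      rw [hi, key i, h i]
    · exact iff_of_false (fun h' => hxs (h'.trans (Nat.gcd_dvd_left _ _)))
        fun h' => hxs (h'.trans hd)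

end

theorem stmt_11 (k : ℕ) (hk : 0 < k) (p q : Fin k → ℕ)
    (hp : ∀ i, (p i).Prime) (hq : ∀ i, (q i).Prime)
    (hpinj : Function.Injective p) (hqinj : Function.Injective q)
    (hpq : ∀ i j, p i ≠ q j)
    (S : Finset ℕ)
    (hS : S = Finset.image
      (fun I : Finset (Fin k) => (∏ i ∈ I, p i) * ∏ j ∈ Iᶜ, q j)
      Finset.univ) :
    S.card = 2 ^ k ∧ GoodSet S := by
  simp only [prod_mul_prod_compl_eq] at hS
  subst hS
  refine ⟨?_, ?_, ?_⟩
  · rw [Finset.card_image_of_injective]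
    · simp
    · intro I J h
      dsimp only at h
      ext i
      rw [← factor_dvd_prod_iff hp hq hpinj hqinj hpq I J i, ← h]
      exact Finset.dvd_prod_of_mem _ (Finset.mem_univ i)
  · intro s hs
    obtain ⟨I, -, rfl⟩ := Finset.mem_image.1 hs
    exact Finset.prod_pos fun i _ => (choiceFactor_prime hp hq I i).pos
  · intro s hs d _ hd
    obtain ⟨I, -, rfl⟩ := Finset.mem_image.1 hs
    refine ⟨∏ i, choiceFactor p q
      (Finset.univ.filter fun i => i ∈ I ↔ choiceFactor p q I i ∣ d) i,
      ⟨Finset.mem_image_of_mem _ (Finset.mem_univ _), ?_⟩, ?_⟩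
    · rw [gcd_prod_eq_iff hp hq hpinj hqinj hpq I _ hd]
      intro i
      simp only [Finset.mem_filter, Finset.mem_univ, true_and]
      tauto
    · rintro t ⟨ht, hgcd⟩
      obtain ⟨J, -, rfl⟩ := Finset.mem_image.1 ht
      rw [gcd_prod_eq_iff hp hq hpinj hqinj hpq I J hd] at hgcd
      have hJ : J = Finset.univ.filter fun i => i ∈ I ↔ choiceFactor p q I i ∣ d := by
        ext i
        have := hgcd i
        simp only [Finset.mem_filter, Finset.mem_univ, true_and]
        tauto
      rw [← hJ]
end

section
/- Let S be a finite nonempty set of positive integers that is good. Then every element of S is squarefree: for every s ∈ S and every prime p dividing s, p² does not divide s. -/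
/-- Counts the elements of `S` satisfying `P` through their gcds with a fixed `s ∈ S`. -/
lemma card_filter_of_good {S : Finset ℕ} (hS : GoodSet S) {s : ℕ} (hs : s ∈ S)
    (P : ℕ → Prop) [DecidablePred P] (hP : ∀ t, P (Nat.gcd s t) ↔ P t) :
    (S.filter P).card = (s.divisors.filter P).card := by
  have hs0 : 0 < s := hS.1 s hs
  refine Finset.card_bij (fun t _ => Nat.gcd s t) ?_ ?_ ?_
  · intro t ht
    simp only [Finset.mem_filter, Nat.mem_divisors] at ht ⊢
    exact ⟨⟨Nat.gcd_dvd_left s t, hs0.ne'⟩, (hP t).2 ht.2⟩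
  · intro t ht u hu h
    simp only [Finset.mem_filter] at ht hu
    exact (hS.2 s hs (Nat.gcd s u) (Nat.gcd_pos_of_pos_left _ hs0)
      (Nat.gcd_dvd_left s u)).unique ⟨ht.1, h⟩ ⟨hu.1, rfl⟩
  · intro d hd
    simp only [Finset.mem_filter, Nat.mem_divisors] at hd
    obtain ⟨t, ⟨htS, ht⟩, -⟩ := hS.2 s hs d (Nat.pos_of_dvd_of_pos hd.1.1 hs0) hd.1.1
    exact ⟨t, Finset.mem_filter.2 ⟨htS, (hP t).1 (ht ▸ hd.2)⟩, ht⟩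

lemma card_eq_of_good {S : Finset ℕ} (hS : GoodSet S) {p a m : ℕ} (hp : p.Prime)
    (hs : p ^ a * m ∈ S) (ha : a ≠ 0) (hm : ¬ p ∣ m) :
    S.card = (a + 1) * (S.filter (fun t => ¬ p ∣ t)).card := by
  have hs0 : 0 < p ^ a * m := hS.1 _ hs
  have hm0 : m ≠ 0 := by rintro rfl; simp at hm
  have hcop : (p ^ a).Coprime m := ((Nat.Prime.coprime_iff_not_dvd hp).2 hm).pow_left a
  have hall := card_filter_of_good hS hs (fun _ => True) (fun _ => Iff.rfl)
  simp only [Finset.filter_true] at hall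
  have hps : p ∣ p ^ a * m := (dvd_pow_self p ha).mul_right m
  rw [card_filter_of_good hS hs (fun t => ¬ p ∣ t)
    (fun t => by rw [Nat.dvd_gcd_iff]; tauto), hall, hcop.card_divisors_mul,
    Nat.divisors_prime_pow hp, Finset.card_map, Finset.card_range]
  congr 2
  ext d
  simp only [Finset.mem_filter, Nat.mem_divisors]
  constructor
  · rintro ⟨hd, -⟩
    exact ⟨⟨hd.mul_left _, hs0.ne'⟩, fun h => hm (h.trans hd)⟩
  · rintro ⟨⟨hd, -⟩, hpd⟩
    exact ⟨(((Nat.Prime.coprime_iff_not_dvd hp).2 hpd).symm.pow_right a).dvd_of_dvd_mul_left hd,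
      hm0⟩

theorem stmt_13 (S : Finset ℕ) (hS : GoodSet S) (hne : S.Nonempty) :
    ∀ s ∈ S, ∀ p : ℕ, p.Prime → p ∣ s → ¬ (p ^ 2 ∣ s) := by
  intro s hs p hp hps hp2
  obtain ⟨t, ⟨htS, ht⟩, -⟩ := hS.2 s hs p hp.pos hps
  obtain ⟨k, hk⟩ : p ∣ t := ht ▸ Nat.gcd_dvd_right s t
  have hpk : ¬ p ∣ k := by
    intro h
    have h2 : p ^ 2 ∣ Nat.gcd s t :=
      Nat.dvd_gcd hp2 (by rw [hk, pow_two]; exact mul_dvd_mul_left p h)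
    rw [ht] at h2
    have := Nat.le_of_dvd hp.pos h2
    nlinarith [hp.two_le]
  have e1 := card_eq_of_good hS (a := 1) (m := k) hp (by rwa [pow_one, ← hk]) one_ne_zero hpk
  obtain ⟨a, m, hm, rfl⟩ := Nat.exists_eq_pow_mul_and_not_dvd (hS.1 s hs).ne' p hp.ne_one
  have ha : 2 ≤ a := by
    by_contra! hlt
    have h1 : p ^ 2 ∣ p * m := hp2.trans (mul_dvd_mul_right
      (by simpa using pow_dvd_pow p (show a ≤ 1 by omega)) m)
    rw [pow_two] at h1
    exact hm (Nat.dvd_of_mul_dvd_mul_left hp.pos h1)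
  have e2 := card_eq_of_good hS hp hs (by omega) hm
  have hpos := hne.card_pos
  nlinarith
end

section
/- Let n ≥ 4 be an integer and let a₁, a₂, …, a_{2n} be positive real numbers (indices taken modulo 2n) satisfying, for each i = 1, …, n, the equations a_{2i−1} = 1/a_{2i−2} + 1/a_{2i} and a_{2i} = a_{2i−1} + a_{2i+1} (where a₀ = a_{2n} and a_{2n+1} = a₁). Then a_{2i−1} = 1 and a_{2i} = 2 for all i = 1, …, n. -/
/-!
Write `b i = a (2 * i)`. Eliminating the odd-indexed unknowns gives
`b i = 1 / b (i - 1) + 2 / b i + 1 / b (i + 1)`. Let `M` and `m` be the largest and smallest values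
of `b`. Evaluating at the maximum gives `M ≤ 2 / M + 2 / m`, and at the minimum
`2 / M + 2 / m ≤ m`; hence `M ≤ m`, so `b` is constant, and the
recurrence forces the constant to be `2`. The odd-indexed unknowns are then `1 / 2 + 1 / 2 = 1`.
-/


theorem stmt_15 (n : ℕ) (hn : 4 ≤ n) (a : ZMod (2 * n) → ℝ)
    (hpos : ∀ j : ZMod (2 * n), 0 < a j)
    (hodd : ∀ i : ℤ, a ((2 * i - 1 : ℤ) : ZMod (2 * n)) =
      1 / a ((2 * i - 2 : ℤ) : ZMod (2 * n)) + 1 / a ((2 * i : ℤ) : ZMod (2 * n)))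
    (heven : ∀ i : ℤ, a ((2 * i : ℤ) : ZMod (2 * n)) =
      a ((2 * i - 1 : ℤ) : ZMod (2 * n)) + a ((2 * i + 1 : ℤ) : ZMod (2 * n))) :
    ∀ i : ℤ, a ((2 * i - 1 : ℤ) : ZMod (2 * n)) = 1 ∧
      a ((2 * i : ℤ) : ZMod (2 * n)) = 2 := by
  have : NeZero (2 * n) := ⟨by omega⟩
  let b : ℤ → ℝ := fun i => a ((2 * i : ℤ) : ZMod (2 * n))
  have hb : ∀ i, 0 < b i := fun i => hpos _
  have hc : ∀ i : ℤ, a ((2 * i - 1 : ℤ) : ZMod (2 * n)) = 1 / b (i - 1) + 1 / b i := by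
    intro i
    have h := hodd i
    rwa [show 2 * i - 2 = 2 * (i - 1) by ring] at h
  have hrec : ∀ i, b i = (1 / b (i - 1) + 1 / b i) + (1 / b i + 1 / b (i + 1)) := by
    intro i
    have h := heven i
    have h' := hc (i + 1)
    rw [show 2 * (i + 1) - 1 = 2 * i + 1 by ring, show i + 1 - 1 = i by ring] at h'
    rwa [hc i, h'] at h
  have hfin : (Set.range b).Finite :=
    (Set.finite_range a).subset (by rintro _ ⟨i, rfl⟩; exact ⟨_, rfl⟩)
  obtain ⟨_, ⟨p, rfl⟩, hp⟩ := Set.exists_max_image _ id hfin ⟨_, 0, rfl⟩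
  obtain ⟨_, ⟨q, rfl⟩, hq⟩ := Set.exists_min_image _ id hfin ⟨_, 0, rfl⟩
  have hmax : ∀ i, b i ≤ b p := fun i => hp _ ⟨i, rfl⟩
  have hmin : ∀ i, b q ≤ b i := fun i => hq _ ⟨i, rfl⟩
  have hle : b p ≤ b q := by
    have h1 := one_div_le_one_div_of_le (hb q) (hmin (p - 1))
    have h2 := one_div_le_one_div_of_le (hb q) (hmin (p + 1))
    have h3 := one_div_le_one_div_of_le (hb (q - 1)) (hmax (q - 1))
    have h4 := one_div_le_one_div_of_le (hb (q + 1)) (hmax (q + 1))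
    linarith [hrec p, hrec q]
  have hconst : ∀ i, b i = b q := fun i => le_antisymm ((hmax i).trans hle) (hmin i)
  have hq2 : b q = 2 := by
    have h := hrec q
    rw [hconst (q - 1), hconst (q + 1)] at h
    have h0 := hb q
    field_simp at h
    nlinarith
  intro i
  refine ⟨?_, (hconst i).trans hq2⟩
  rw [hc i, hconst (i - 1), hconst i, hq2]
  norm_num
end

section
/- Let n ≥ 4 be an integer and let b₁, …, b_n be positive real numbers indexed cyclically modulo n such that for each i, b_i = 1/b_{i−1} + 2/b_i + 1/b_{i+1}. Then b_i = 2 for all i. -/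
/-!
With `a i = 1 / b i`, the system says that `a` is a critical point of the strictly concave function
`∑ log (a i) - (1/2) ∑ (a i + a (i+1))²` on the positive orthant, and `a = 1/2` is another one, so
they coincide. Concretely, put `d i = a i - 1/2`. Subtracting the two critical point equations gives
`-2 * b i * d i = d (i-1) + 2 * d i + d (i+1)`; multiplying by `d i` and summing over the cycle gives
`∑ ((d i + d (i+1))² + 2 * b i * (d i)²) = 0`, which forces `d = 0`.
-/

theorem stmt_17 (n : ℕ) (hn : 4 ≤ n) (b : ZMod n → ℝ)
    (hpos : ∀ i : ZMod n, 0 < b i)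
    (heq : ∀ i : ZMod n, b i = 1 / b (i - 1) + 2 / b i + 1 / b (i + 1)) :
    ∀ i : ZMod n, b i = 2 := by
  have : NeZero n := ⟨by omega⟩
  let d : ZMod n → ℝ := fun i => 1 / b i - 1 / 2
  have hd : ∀ i, -2 * b i * d i = d (i - 1) + 2 * d i + d (i + 1) := by
    intro i
    have h1 : b i * (1 / b i) = 1 := mul_one_div_cancel (hpos i).ne'
    have h2 : 2 / b i = 2 * (1 / b i) := by ring
    have h3 := heq i
    simp only [d]
    linear_combination h3 + h2 - 2 * h1
  let G : ZMod n → ℝ := fun i => d i ^ 2 + d i * d (i - 1)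
  -- Summation by parts around the cycle: each summand is a difference of consecutive values of `G`.
  have hG : ∀ i, (d i + d (i + 1)) ^ 2 + 2 * b i * d i ^ 2 = G (i + 1) - G i := by
    intro i
    simp only [G, add_sub_cancel_right]
    linear_combination (-d i) * hd i
  have hsum : ∑ i, ((d i + d (i + 1)) ^ 2 + 2 * b i * d i ^ 2) = 0 := by
    rw [Finset.sum_congr rfl fun i _ => hG i, Finset.sum_sub_distrib, sub_eq_zero]
    exact Equiv.sum_comp (Equiv.addRight (1 : ZMod n)) G
  have hb : ∀ i, 0 ≤ 2 * b i * d i ^ 2 := fun i =>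
    mul_nonneg (by linarith [hpos i]) (sq_nonneg _)
  intro i
  have hi := (Finset.sum_eq_zero_iff_of_nonneg
    fun j _ => add_nonneg (sq_nonneg (d j + d (j + 1))) (hb j)).1 hsum i (Finset.mem_univ i)
  have h0 : 2 * b i * d i ^ 2 = 0 := by linarith [hb i, sq_nonneg (d i + d (i + 1))]
  have hdi : d i = 0 := by simpa [(hpos i).ne'] using h0
  have h1 : b i * (1 / b i) = 1 := mul_one_div_cancel (hpos i).ne'
  simp only [d] at hdi
  linear_combination 2 * h1 - 2 * b i * hdi
end

section
/- Let n ≥ 4 be an integer and let b₁, …, b_n be positive real numbers indexed cyclically modulo n satisfying b_i = 1/b_{i−1} + 2/b_i + 1/b_{i+1} for each i. Then ∑_{i=1}^n b_i = ∑_{i=1}^n 4/b_i, and consequently ∑_{i=1}^n b_i ≥ 2n. -/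
theorem stmt_18 (n : ℕ) [NeZero n] (hn : 4 ≤ n) (b : ZMod n → ℝ)
    (hpos : ∀ i : ZMod n, 0 < b i)
    (heq : ∀ i : ZMod n, b i = 1 / b (i - 1) + 2 / b i + 1 / b (i + 1)) :
    (∑ i : ZMod n, b i = ∑ i : ZMod n, 4 / b i) ∧
    (2 * n : ℝ) ≤ ∑ i : ZMod n, b i := by
  -- Cyclic shifts permute the index set, so each reciprocal is counted `1 + 2 + 1` times.
  have hsum : ∑ i : ZMod n, b i = ∑ i : ZMod n, 4 / b i := by
    have hprev : ∑ i : ZMod n, 1 / b (i - 1) = ∑ i : ZMod n, 1 / b i :=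
      Equiv.sum_comp (Equiv.subRight (1 : ZMod n)) fun i => 1 / b i
    have hnext : ∑ i : ZMod n, 1 / b (i + 1) = ∑ i : ZMod n, 1 / b i :=
      Equiv.sum_comp (Equiv.addRight (1 : ZMod n)) fun i => 1 / b i
    rw [Finset.sum_congr rfl fun i _ => heq i, Finset.sum_add_distrib, Finset.sum_add_distrib,
      hprev, hnext, ← Finset.sum_add_distrib, ← Finset.sum_add_distrib]
    exact Finset.sum_congr rfl fun i _ => by ring
  refine ⟨hsum, ?_⟩
  -- By the first part `2 ∑ b i = ∑ (b i + 4 / b i)`, and each summand is at least `4` by AM-GM.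
  have hterm : ∀ i : ZMod n, 4 ≤ b i + 4 / b i := fun i => by
    have hi := hpos i
    have hsq : b i + 4 / b i - 4 = (b i - 2) ^ 2 / b i := by
      field_simp
      ring
    have hnonneg : 0 ≤ (b i - 2) ^ 2 / b i := by positivity
    linarith
  have htotal : ∑ _i : ZMod n, (4 : ℝ) ≤ ∑ i : ZMod n, (b i + 4 / b i) :=
    Finset.sum_le_sum fun i _ => hterm i
  rw [Finset.sum_add_distrib, ← hsum, Finset.sum_const, Finset.card_univ, ZMod.card,
    nsmul_eq_mul] at htotal
  linarith
end

section
/- Let n ≥ 4 be an integer and let b₁, …, b_n be positive real numbers indexed cyclically modulo n satisfying b_i = 1/b_{i−1} + 2/b_i + 1/b_{i+1} for each i. Then n = ∑_{i=1}^n (1/b_i + 1/b_{i+1})², and consequently ∑_{i=1}^n b_i ≤ 2n. -/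
/-!
Put `s i = 1 / b i + 1 / b (i + 1)`. The system says `b i = s (i - 1) + s i`, so multiplying by
`1 / b i` gives `1 = (1 / b i) * s (i - 1) + (1 / b i) * s i`. Summing over the cycle and shifting
the index in the first term collects the coefficient `1 / b (i + 1) + 1 / b i = s i` of `s i`,
hence `n = ∑ (s i) ^ 2`. Similarly `∑ b i = 2 * ∑ s i`, and Cauchy–Schwarz gives
`(∑ s i) ^ 2 ≤ n * ∑ (s i) ^ 2 = n ^ 2`.
-/

theorem stmt_19 (n : ℕ) [NeZero n] (hn : 4 ≤ n) (b : ZMod n → ℝ)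
    (hpos : ∀ i : ZMod n, 0 < b i)
    (heq : ∀ i : ZMod n, b i = 1 / b (i - 1) + 2 / b i + 1 / b (i + 1)) :
    ((n : ℝ) = ∑ i : ZMod n, (1 / b i + 1 / b (i + 1)) ^ 2) ∧
    ∑ i : ZMod n, b i ≤ (2 * n : ℝ) := by
  have hshift (f : ZMod n → ℝ) : ∑ i, f (i + 1) = ∑ i, f i :=
    Equiv.sum_comp (Equiv.addRight (1 : ZMod n)) f
  obtain ⟨s, hs⟩ : ∃ s : ZMod n → ℝ, ∀ i, s i = 1 / b i + 1 / b (i + 1) := ⟨_, fun _ => rfl⟩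
  have hb (i : ZMod n) : b i = s (i - 1) + s i := by
    rw [hs, hs, sub_add_cancel]
    linear_combination heq i
  have hone (i : ZMod n) : 1 / b i * s (i - 1) + 1 / b i * s i = 1 := by
    rw [← mul_add, ← hb, one_div_mul_cancel (hpos i).ne']
  have hsq : (n : ℝ) = ∑ i, s i ^ 2 := by
    calc (n : ℝ) = ∑ i : ZMod n, (1 / b i * s (i - 1) + 1 / b i * s i) := by
          simp only [hone, Finset.sum_const, Finset.card_univ, ZMod.card, nsmul_eq_mul, mul_one]
      _ = ∑ i, (1 / b (i + 1) * s i + 1 / b i * s i) := by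
          rw [Finset.sum_add_distrib, ← hshift (fun i => 1 / b i * s (i - 1)),
            ← Finset.sum_add_distrib]
          simp only [add_sub_cancel_right]
      _ = ∑ i, s i ^ 2 := Finset.sum_congr rfl fun i _ => by
          linear_combination -s i * hs i
  refine ⟨by simpa only [hs] using hsq, ?_⟩
  have hsum : ∑ i, b i = 2 * ∑ i, s i := by
    simp only [hb, Finset.sum_add_distrib]
    rw [← hshift (fun i => s (i - 1))]
    simp only [add_sub_cancel_right]
    ring
  have hcs : (∑ i, s i) ^ 2 ≤ (n : ℝ) ^ 2 := by
    have h := sq_sum_le_card_mul_sum_sq (s := Finset.univ) (f := s)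
    rwa [Finset.card_univ, ZMod.card, ← hsq, ← sq] at h
  have hle : ∑ i, s i ≤ n := le_of_sq_le_sq hcs n.cast_nonneg
  rw [hsum]
  linarith
end
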